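/- arXiv:1605.02618 — 2 statements merged into one kernel-verified Lean document; each statement's English description precedes it below -/
import Mathlib

section
/- Fix a real number x > 1/2 and set s = √(2x−1), u(t) = t·s − arctan(s), p = ((√(2x)+1)/(√(2x)−1))^{√2/4}, and for real y with sin y < 0 and 1 + cos y > 0 define F₁(y) = (−1/(√2·sin y))·(−sin y/(1+cos y))^{−1/√2} and F₂(y) = (−1/(√2·sin y))·(−sin y/(1+cos y))^{1/√2}. Then there exists ε > 0 such that for every real t with |t| < ε, the series Σ_{n≥0} R⁻_n(x)·tⁿ/n! converges and equals (−s/(2·p))·(p²·F₂(u(t)) − F₁(u(t))). -/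
/-!
Write `R⁺_n`, `R⁻_n` for the descent polynomials (`Rsum 0 n`, `Rsum 1 n` below). Every signed
simsun permutation of rank `n + 1` arises from a unique one of rank `n` by inserting `n + 1` or
`-(n + 1)` in some gap without creating a double descent. Counting the admissible gaps by their
effect on the descent number (`sum_insert_max`, `sum_insert_min`), and noting that only the first
gap affects the sign of `π(1)`, gives (`Rsum_zero_succ`, `Rsum_one_succ`)

* `R⁺_{n+1} = (1 + 2 n x) R⁺_n + 2 x (1 - 2 x) R⁺_n' + R⁻_n`,
* `R⁻_{n+1} = x R⁺_n + (2 n + 2) x R⁻_n + 2 x (1 - 2 x) R⁻_n'`.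

For `x > 1/2` introduce the coordinate `y ∈ (-π/2, 0)` with `2 x = 1 / cos² y`. Then
`s = √(2 x - 1) = -tan y`, and `2 x (1 - 2 x) d/dx` becomes `-tan y d/dy` (`deriv_coord`). With
`T = (-sin y / (1 + cos y)) ^ (1/√2)`, which satisfies `T' = T / (√2 sin y)`, an induction on `n`
shows (`Rsum_closed`) that the recurrences are solved by

* `R⁺_n(x) = s ^ n (√2/2) (-sin y) (T F₁⁽ⁿ⁾(y) + T⁻¹ F₂⁽ⁿ⁾(y))`,
* `R⁻_n(x) = s ^ (n+1) (1/2) (T F₁⁽ⁿ⁾(y) - T⁻¹ F₂⁽ⁿ⁾(y))`.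

Finally `T⁻¹ = p` (`pfun_eq`), and `F₁`, `F₂` are analytic at `y = -arctan s = u(0)`, so summing
their Taylor series at `y` with increment `s t` gives the generating function of the `R⁻_n(x)`.
-/

open Finset

/-- A signed permutation of rank `n`, encoded as an (unsigned) permutation of
`Fin n` together with a choice of sign for each position: the entry
`π(i+1)` of the word is `±(σ(i)+1)` where the sign is `-` iff `sgn i = true`. -/
abbrev SignedPerm (n : ℕ) := Equiv.Perm (Fin n) × (Fin n → Bool)

/-- The entry `π(j+1)` of the word of a signed permutation. -/
def entry {n : ℕ} (π : SignedPerm n) (j : Fin n) : ℤ :=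
  (if π.2 j then -1 else 1) * (((π.1 j : ℕ) : ℤ) + 1)

/-- The word `π(0)π(1)⋯π(n)` of a signed permutation (with the leading `0`). -/
def word {n : ℕ} (π : SignedPerm n) : List ℤ :=
  0 :: List.ofFn (entry π)

/-- `π(i)` for `0 ≤ i ≤ n` (and `0` outside this range). -/
def wordFn {n : ℕ} (π : SignedPerm n) (i : ℕ) : ℤ :=
  if h : 1 ≤ i ∧ i ≤ n then entry π ⟨i - 1, by omega⟩ else 0

/-- A word has no double descent: no three consecutive strictly decreasing entries. -/
def noDD : List ℤ → Bool
  | a :: b :: c :: rest => (!(decide (b < a) && decide (c < b))) && noDD (b :: c :: rest)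
  | _ => true

/-- A signed permutation is simsun if for every `0 ≤ k ≤ n`, deleting the entries
`±n, …, ±(n-k+1)` (i.e. keeping the entries of absolute value `≤ m := n - k`) from the
word `π(0)π(1)⋯π(n)` leaves a word with no three consecutive strictly decreasing
entries. -/
def IsSimsun {n : ℕ} (π : SignedPerm n) : Prop :=
  ∀ m ≤ n, noDD ((word π).filter (fun a => a.natAbs ≤ m)) = true

instance {n : ℕ} : DecidablePred (IsSimsun (n := n)) := fun _ => by
  unfold IsSimsun; infer_instance

/-- The type-B descent number `des_B(π) = #{0 ≤ i ≤ n-1 : π(i) > π(i+1)}`. -/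
def desB {n : ℕ} (π : SignedPerm n) : ℕ :=
  ((Finset.range n).filter (fun i => wordFn π (i + 1) < wordFn π i)).card

/-- The set of signed simsun permutations of rank `n`. -/
def RB (n : ℕ) : Finset (SignedPerm n) := univ.filter IsSimsun

/-- Signed simsun permutations with `π(1) > 0` (for `n = 0`, the empty permutation
is included, following the convention `R⁺_0 = 1`). -/
def RBp (n : ℕ) : Finset (SignedPerm n) :=
  (RB n).filter (fun π => 0 < wordFn π 1 ∨ n = 0)

/-- Signed simsun permutations with `π(1) < 0`. -/
def RBm (n : ℕ) : Finset (SignedPerm n) :=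
  (RB n).filter (fun π => wordFn π 1 < 0)

/-- A signed permutation is even-signed if its word has an even number of negative entries. -/
def IsEvenSigned {n : ℕ} (π : SignedPerm n) : Prop :=
  (univ.filter (fun j => π.2 j = true)).card % 2 = 0

instance {n : ℕ} : DecidablePred (IsEvenSigned (n := n)) := fun _ => by
  unfold IsEvenSigned; infer_instance

def RD (n : ℕ) : Finset (SignedPerm n) := (RB n).filter IsEvenSigned
def RT (n : ℕ) : Finset (SignedPerm n) := (RB n).filter (fun π => ¬ IsEvenSigned π)
def RDp (n : ℕ) : Finset (SignedPerm n) := (RD n).filter (fun π => 0 < wordFn π 1 ∨ n = 0)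
def RDm (n : ℕ) : Finset (SignedPerm n) := (RD n).filter (fun π => wordFn π 1 < 0)
def RTp (n : ℕ) : Finset (SignedPerm n) := (RT n).filter (fun π => 0 < wordFn π 1 ∨ n = 0)
def RTm (n : ℕ) : Finset (SignedPerm n) := (RT n).filter (fun π => wordFn π 1 < 0)

/-- `R(n,k)`, as an integer, vanishing for `k < 0`. -/
def Rcnt (n : ℕ) (k : ℤ) : ℤ := ((RB n).filter (fun π => (desB π : ℤ) = k)).card
def Rpcnt (n : ℕ) (k : ℤ) : ℤ := ((RBp n).filter (fun π => (desB π : ℤ) = k)).card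
def Rmcnt (n : ℕ) (k : ℤ) : ℤ := ((RBm n).filter (fun π => (desB π : ℤ) = k)).card
def Dcnt (n : ℕ) (k : ℤ) : ℤ := ((RD n).filter (fun π => (desB π : ℤ) = k)).card
def Tcnt (n : ℕ) (k : ℤ) : ℤ := ((RT n).filter (fun π => (desB π : ℤ) = k)).card
def Dpcnt (n : ℕ) (k : ℤ) : ℤ := ((RDp n).filter (fun π => (desB π : ℤ) = k)).card
def Dmcnt (n : ℕ) (k : ℤ) : ℤ := ((RDm n).filter (fun π => (desB π : ℤ) = k)).card
def Tpcnt (n : ℕ) (k : ℤ) : ℤ := ((RTp n).filter (fun π => (desB π : ℤ) = k)).card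
def Tmcnt (n : ℕ) (k : ℤ) : ℤ := ((RTm n).filter (fun π => (desB π : ℤ) = k)).card

/-- `R⁺_n(x)` as a real number, for real `x`. -/
def RpReal (n : ℕ) (x : ℝ) : ℝ := ∑ π ∈ RBp n, x ^ desB π
/-- `R⁻_n(x)` as a real number, for real `x`. -/
def RmReal (n : ℕ) (x : ℝ) : ℝ := ∑ π ∈ RBm n, x ^ desB π

/-- `p(x) = ((√(2x)+1)/(√(2x)-1))^{√2/4}`. -/
noncomputable def pfun (x : ℝ) : ℝ :=
  ((Real.sqrt (2*x) + 1) / (Real.sqrt (2*x) - 1)) ^ (Real.sqrt 2 / 4)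

/-- `u(x,t) = t√(2x-1) - arctan(√(2x-1))`. -/
noncomputable def ufun (x t : ℝ) : ℝ :=
  t * Real.sqrt (2*x - 1) - Real.arctan (Real.sqrt (2*x - 1))

/-- `F₁(y) = (-1/(√2 sin y)) (−sin y/(1+cos y))^{-1/√2}` (real power function). -/
noncomputable def Ffun₁ (y : ℝ) : ℝ :=
  (-1 / (Real.sqrt 2 * Real.sin y)) *
    ((-Real.sin y / (1 + Real.cos y)) ^ (-(1 / Real.sqrt 2)))

/-- `F₂(y) = (-1/(√2 sin y)) (−sin y/(1+cos y))^{1/√2}` (real power function). -/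
noncomputable def Ffun₂ (y : ℝ) : ℝ :=
  (-1 / (Real.sqrt 2 * Real.sin y)) *
    ((-Real.sin y / (1 + Real.cos y)) ^ (1 / Real.sqrt 2))

/-! ### Words: descents, double descents, insertion -/

/-- The number of descents of the word `a :: l`. -/
def desL : ℤ → List ℤ → ℕ
  | _, [] => 0
  | a, b :: l => (if b < a then 1 else 0) + desL b l

/-- The word `a :: l` has no double descent, where `d` records whether `a` was itself
reached by a descent (so that `d = true` forbids `a :: l` to start with a descent). -/
def okL : Bool → ℤ → List ℤ → Bool
  | _, _, [] => true
  | d, a, b :: l => !(d && decide (b < a)) && okL (decide (b < a)) b l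

/-- `1` if the word `a :: l` starts with a descent, `0` otherwise. -/
def firstDes : ℤ → List ℤ → ℕ
  | _, [] => 0
  | a, b :: _ => if b < a then 1 else 0

lemma firstDes_cons (a b : ℤ) (l : List ℤ) : firstDes a (b :: l) = if b < a then 1 else 0 := rfl

/-- The contribution `x ^ des` of the word `a :: l`, or `0` if `okL d a l` fails. -/
def wt (x : ℝ) (d : Bool) (a : ℤ) (l : List ℤ) : ℝ :=
  if okL d a l then x ^ desL a l else 0

lemma okL_mono {d : Bool} {a : ℤ} {l : List ℤ} (h : okL d a l = true) : okL false a l = true := by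
  cases l <;> simp_all [okL]

lemma okL_true_iff {d : Bool} {a : ℤ} {l : List ℤ} (h : okL d a l = true) :
    okL true a l = true ↔ firstDes a l = 0 := by
  cases l <;> simp_all [okL, firstDes]

lemma noDD_cons (a : ℤ) (l : List ℤ) : noDD (a :: l) = okL false a l := by
  induction l generalizing a with
  | nil => simp [noDD, okL]
  | cons b l ih =>
    cases l with
    | nil => simp [noDD, okL]
    | cons c l =>
      rw [noDD, ih b]
      simp only [okL]
      by_cases h1 : b < a <;> by_cases h2 : c < b <;> simp [h1, h2]

lemma wt_cons (x : ℝ) (d : Bool) (a b : ℤ) (l : List ℤ) :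
    wt x d a (b :: l) = if d && decide (b < a) then 0
      else (if b < a then x else 1) * wt x (decide (b < a)) b l := by
  unfold wt
  cases d <;> by_cases h : b < a <;> simp [okL, desL, h, pow_add]

/-- Inserting a new maximum `N` into the word `a :: l` (anywhere after `a`). A gap at a descent,
or the last gap, leaves the descent number unchanged; a gap at an ascent not followed by a
descent increases it by one; the remaining gaps create a double descent. -/
lemma sum_insert_max (x : ℝ) (N : ℤ) (d : Bool) (a : ℤ) (l : List ℤ)
    (ha : a < N) (hl : ∀ b ∈ l, b < N) (hok : okL d a l = true) :
    ∑ p ∈ range (l.length + 1), wt x d a (l.insertIdx p N) =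
      ((desL a l : ℝ) + 1) * x ^ desL a l +
        ((l.length : ℝ) - 2 * desL a l + firstDes a l) * x ^ (desL a l + 1) := by
  induction l generalizing d a with
  | nil => simp [wt, okL, desL, firstDes, ha.not_gt]
  | cons b l ih =>
    have hb : b < N := hl b (by simp)
    have hok' : okL (decide (b < a)) b l = true := by
      simp only [okL, Bool.and_eq_true] at hok; exact hok.2
    have hd : (d && decide (b < a)) = false := by
      simp only [okL, Bool.and_eq_true, Bool.not_eq_true'] at hok; exact hok.1
    have key := ih (decide (b < a)) b hb (fun c hc => hl c (by simp [hc])) hok'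
    rw [List.length_cons, sum_range_succ']
    simp only [List.insertIdx_succ_cons, List.insertIdx_zero]
    simp only [wt_cons x d a b, hd, Bool.false_eq_true, if_false, ← mul_sum, key]
    have h0 : wt x d a (N :: b :: l) =
        if firstDes b l = 0 then x ^ (desL b l + 1) else 0 := by
      rw [wt_cons, wt_cons]
      simp only [ha.not_gt, hb, decide_false, Bool.and_false, Bool.false_and, Bool.false_eq_true,
        if_false, if_true, one_mul, decide_true]
      unfold wt
      simp only [okL_true_iff hok']
      split_ifs <;> simp [pow_succ, mul_comm]
    rw [h0]
    by_cases h : b < a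
    · have he : firstDes b l = 0 := by
        rw [← okL_true_iff hok']; simpa [h] using hok'
      simp only [he, h, desL, if_true, firstDes_cons]
      push_cast
      ring
    · have he : firstDes b l = 0 ∨ firstDes b l = 1 := by
        cases l with
        | nil => simp [firstDes]
        | cons c l => simp only [firstDes]; split_ifs <;> simp
      rcases he with he | he <;>
      · simp only [he, h, desL, if_false, firstDes_cons]
        simp only [one_ne_zero, ↓reduceIte]
        push_cast
        ring

/-- Inserting a new minimum `-N` into the word `a :: l`. A gap at a descent leaves the descent
number unchanged; the last gap or a gap at an ascent, if not preceded by a descent,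
increases it by one; the remaining gaps create a double descent. -/
lemma sum_insert_min (x : ℝ) (N : ℤ) (d : Bool) (a : ℤ) (l : List ℤ)
    (ha : -N < a) (hl : ∀ b ∈ l, -N < b) (hok : okL d a l = true) :
    ∑ p ∈ range (l.length + 1), wt x d a (l.insertIdx p (-N)) =
      (desL a l : ℝ) * x ^ desL a l +
        ((l.length : ℝ) + 1 - 2 * desL a l - (if d then 1 else 0)) * x ^ (desL a l + 1) := by
  induction l generalizing d a with
  | nil => cases d <;> simp [wt, okL, desL, ha]
  | cons b l ih =>
    have hb : -N < b := hl b (by simp)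
    have hok' : okL (decide (b < a)) b l = true := by
      simp only [okL, Bool.and_eq_true] at hok; exact hok.2
    have hd : (d && decide (b < a)) = false := by
      simp only [okL, Bool.and_eq_true, Bool.not_eq_true'] at hok; exact hok.1
    have key := ih (decide (b < a)) b hb (fun c hc => hl c (by simp [hc])) hok'
    rw [List.length_cons, sum_range_succ']
    simp only [List.insertIdx_succ_cons, List.insertIdx_zero]
    simp only [wt_cons x d a b, hd, Bool.false_eq_true, if_false, ← mul_sum, key]
    have h0 : wt x d a (-N :: b :: l) = if d then 0 else x ^ (desL b l + 1) := by
      rw [wt_cons, wt_cons]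
      simp only [ha, hb.not_gt, decide_false, Bool.and_false, Bool.false_eq_true,
        if_false, if_true, one_mul, decide_true, Bool.and_true]
      unfold wt
      simp only [okL_mono hok', if_true]
      split_ifs <;> simp [pow_succ, mul_comm]
    rw [h0]
    by_cases h : b < a
    · have hd' : d = false := by simpa [h] using hd
      simp only [hd', h, desL, if_true]
      push_cast
      simp
      ring
    · cases d <;>
      · simp only [h, desL, if_false, if_true]
        simp only [↓reduceIte, decide_false, Bool.false_eq_true]
        push_cast
        ring

lemma ofFn_eq_insertIdx {n : ℕ} (p : Fin (n + 1)) (g : Fin (n + 1) → ℤ) (f : Fin n → ℤ)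
    (h : ∀ i, g (p.succAbove i) = f i) :
    List.ofFn g = (List.ofFn f).insertIdx p (g p) := by
  induction n with
  | zero =>
    have : p = 0 := by ext; omega
    subst this
    simp
  | succ n ih =>
    refine Fin.cases ?_ (fun q => ?_) p (motive := fun p => (∀ i, g (p.succAbove i) = f i) →
      List.ofFn g = (List.ofFn f).insertIdx p (g p)) h
    · intro h
      rw [List.ofFn_succ]
      simp only [Fin.val_zero, List.insertIdx_zero]
      congr 2
      funext i
      simpa using h i
    · intro h
      rw [List.ofFn_succ, List.ofFn_succ (f := f)]
      simp only [Fin.val_succ, List.insertIdx_succ_cons]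
      congr 1
      · simpa using h 0
      · refine ih q (fun i => g i.succ) (fun i => f i.succ) (fun i => ?_)
        simpa using h i.succ

lemma card_des_eq (n : ℕ) (w : ℕ → ℤ) :
    ((range n).filter (fun i => w (i + 1) < w i)).card =
      desL (w 0) (List.ofFn (fun j : Fin n => w (j + 1))) := by
  induction n generalizing w with
  | zero => simp [desL]
  | succ n ih =>
    rw [card_filter, sum_range_succ', ← card_filter, ih (fun i => w (i + 1))]
    simp [List.ofFn_succ, desL, add_comm]

/-! ### Insertion of the largest entry into a signed permutation -/

/-- The word of a signed permutation without its leading `0`. -/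
def letters {n : ℕ} (π : SignedPerm n) : List ℤ := List.ofFn (entry π)

lemma wordFn_succ {n : ℕ} (π : SignedPerm n) (j : Fin n) : wordFn π (j + 1) = entry π j := by
  unfold wordFn
  rw [dif_pos ⟨by omega, by omega⟩]
  rfl

lemma desB_eq {n : ℕ} (π : SignedPerm n) : desB π = desL 0 (letters π) := by
  unfold desB letters
  rw [card_des_eq]
  simp only [wordFn_succ]
  simp [wordFn]

lemma natAbs_entry {n : ℕ} (π : SignedPerm n) (j : Fin n) :
    (entry π j).natAbs = (π.1 j : ℕ) + 1 := by
  unfold entry; split_ifs <;> omega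

/-- Insert the entry `n + 1` (or `-(n + 1)` if `b`) in position `p`. -/
def insMax {n : ℕ} (q : SignedPerm n × Fin (n + 1) × Bool) : SignedPerm (n + 1) :=
  ((finSuccEquiv' q.2.1).trans
    ((Equiv.optionCongr q.1.1).trans (finSuccEquiv' (Fin.last n)).symm),
   q.2.1.insertNth q.2.2 q.1.2)

lemma insMax_perm_same {n : ℕ} (π : SignedPerm n) (p : Fin (n + 1)) (b : Bool) :
    (insMax (π, p, b)).1 p = Fin.last n := by simp [insMax]

lemma insMax_perm_succAbove {n : ℕ} (π : SignedPerm n) (p : Fin (n + 1)) (b : Bool) (i : Fin n) :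
    (insMax (π, p, b)).1 (p.succAbove i) = (π.1 i).castSucc := by simp [insMax]

lemma insMax_injective {n : ℕ} : Function.Injective (insMax (n := n)) := by
  rintro ⟨π, p, b⟩ ⟨π', p', b'⟩ h
  have hp : p = p' := by
    apply (insMax (π, p, b)).1.injective
    rw [insMax_perm_same, h, insMax_perm_same]
  subst hp
  have h2 : b = b' ∧ π.2 = π'.2 := by
    have := congrArg Prod.snd h
    simp only [insMax] at this
    refine ⟨?_, ?_⟩
    · simpa using congrFun this p
    · funext i; simpa using congrFun this (p.succAbove i)
  have h1 : π.1 = π'.1 := by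
    ext i
    have := congrArg Fin.val (insMax_perm_succAbove π p b i)
    rw [h, insMax_perm_succAbove] at this
    simpa using this.symm
  rw [Prod.ext h1 h2.2, h2.1]

lemma insMax_bijective {n : ℕ} : Function.Bijective (insMax (n := n)) := by
  rw [Fintype.bijective_iff_injective_and_card]
  refine ⟨insMax_injective, ?_⟩
  simp [Fintype.card_perm, Nat.factorial_succ, pow_succ]
  ring

lemma letters_insMax {n : ℕ} (π : SignedPerm n) (p : Fin (n + 1)) (b : Bool) :
    letters (insMax (π, p, b)) =
      (letters π).insertIdx p (if b then -((n : ℤ) + 1) else (n : ℤ) + 1) := by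
  unfold letters
  rw [ofFn_eq_insertIdx p _ (entry π)]
  · congr 1
    unfold entry
    rw [insMax_perm_same]
    cases b <;> simp [insMax]
  · intro i
    unfold entry
    rw [insMax_perm_succAbove]
    simp [insMax]

lemma letters_bound {n : ℕ} (π : SignedPerm n) : ∀ b ∈ letters π, b.natAbs ≤ n := by
  intro b hb
  obtain ⟨j, rfl⟩ := (List.mem_ofFn' _ _).1 hb
  rw [natAbs_entry]; omega

lemma filter_insertIdx_of_not {P : ℤ → Bool} {a : ℤ} (ha : P a = false) (l : List ℤ) (p : ℕ) :
    (l.insertIdx p a).filter P = l.filter P := by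
  induction l generalizing p with
  | nil => cases p <;> simp [ha]
  | cons b l ih => cases p <;> simp [ha, List.filter_cons, ih]

/-- Deleting the entry of absolute value `n + 1` reduces the simsun condition to rank `n`. -/
lemma isSimsun_insMax {n : ℕ} (π : SignedPerm n) (p : Fin (n + 1)) (b : Bool) :
    IsSimsun (insMax (π, p, b)) ↔
      IsSimsun π ∧ okL false 0 (letters (insMax (π, p, b))) = true := by
  have hword : ∀ {m : ℕ} (ρ : SignedPerm m), word ρ = 0 :: letters ρ := fun _ => rfl
  have hlow : ∀ m ≤ n, (word (insMax (π, p, b))).filter (fun a => a.natAbs ≤ m) =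
      (word π).filter (fun a => a.natAbs ≤ m) := by
    intro m hm
    rw [hword, hword, letters_insMax, List.filter_cons, List.filter_cons,
      filter_insertIdx_of_not]
    cases b <;> simp <;> omega
  have htop : (word (insMax (π, p, b))).filter (fun a => a.natAbs ≤ n + 1) =
      0 :: letters (insMax (π, p, b)) := by
    rw [hword, List.filter_eq_self]
    intro a ha
    rcases List.mem_cons.1 ha with rfl | ha
    · simp
    · simpa using letters_bound _ a ha
  rw [← noDD_cons, ← htop]
  constructor
  · intro h
    exact ⟨fun m hm => by rw [← hlow m hm]; exact h m (by omega), h _ le_rfl⟩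
  · rintro ⟨h1, h2⟩ m hm
    rcases Nat.lt_or_ge n m with h | h
    · obtain rfl : m = n + 1 := by omega
      exact h2
    · rw [hlow m h]; exact h1 m h

lemma okL_of_isSimsun {n : ℕ} {π : SignedPerm n} (h : IsSimsun π) :
    okL false 0 (letters π) = true := by
  rw [← noDD_cons]
  have := h n le_rfl
  rwa [List.filter_eq_self.2] at this
  intro a ha
  rcases List.mem_cons.1 ha with rfl | ha
  · simp
  · simpa using letters_bound _ a ha

lemma wordFn_one {n : ℕ} (π : SignedPerm n) : (wordFn π 1 < 0 ↔ firstDes 0 (letters π) = 1) ∧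
    ((0 < wordFn π 1 ∨ n = 0) ↔ firstDes 0 (letters π) = 0) := by
  cases n with
  | zero => simp [wordFn, letters, firstDes]
  | succ n =>
    have h := wordFn_succ π 0
    have h2 := natAbs_entry π 0
    simp only [Fin.val_zero, zero_add] at h
    rw [h, letters, List.ofFn_succ, firstDes]
    constructor <;> split_ifs <;> simp <;> omega

/-- The descent generating function of the signed simsun permutations `π` for which
`[π(1) < 0] = e`. -/
def Rsum (e n : ℕ) (x : ℝ) : ℝ :=
  ∑ π : SignedPerm n, if IsSimsun π ∧ firstDes 0 (letters π) = e then x ^ desL 0 (letters π) else 0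

lemma RmReal_eq (n : ℕ) (x : ℝ) : RmReal n x = Rsum 1 n x := by
  unfold RmReal RBm RB Rsum
  rw [filter_filter, sum_filter]
  simp only [wordFn_one, desB_eq]

lemma Rsum_succ (e n : ℕ) (x : ℝ) :
    Rsum e (n + 1) x = ∑ π : SignedPerm n, if IsSimsun π then
      (∑ p ∈ range (n + 1), if firstDes 0 ((letters π).insertIdx p ((n : ℤ) + 1)) = e then
          wt x false 0 ((letters π).insertIdx p ((n : ℤ) + 1)) else 0) +
      (∑ p ∈ range (n + 1), if firstDes 0 ((letters π).insertIdx p (-((n : ℤ) + 1))) = e then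
          wt x false 0 ((letters π).insertIdx p (-((n : ℤ) + 1))) else 0) else 0 := by
  unfold Rsum
  rw [← (insMax_bijective (n := n)).sum_comp, Fintype.sum_prod_type]
  refine sum_congr rfl fun π _ => ?_
  rw [Fintype.sum_prod_type_right, Fintype.sum_bool, add_comm]
  simp only [isSimsun_insMax, letters_insMax, Bool.false_eq_true, if_false, if_true]
  by_cases hπ : IsSimsun π
  · simp only [hπ, true_and, if_true]
    rw [← Fin.sum_univ_eq_sum_range (fun p => if firstDes 0 ((letters π).insertIdx p
      ((n : ℤ) + 1)) = e then wt x false 0 ((letters π).insertIdx p ((n : ℤ) + 1)) else 0),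
      ← Fin.sum_univ_eq_sum_range (fun p => if firstDes 0 ((letters π).insertIdx p
      (-((n : ℤ) + 1))) = e then wt x false 0 ((letters π).insertIdx p (-((n : ℤ) + 1))) else 0)]
    unfold wt
    congr 1 <;>
    · refine sum_congr rfl fun p _ => ?_
      split_ifs <;> simp_all
  · simp [hπ]

/-! ### The recurrences for the descent polynomials -/

/-- The formal derivative of `Rsum e n`. -/
def RsumDeriv (e n : ℕ) (x : ℝ) : ℝ :=
  ∑ π : SignedPerm n, if IsSimsun π ∧ firstDes 0 (letters π) = e then
    (desL 0 (letters π) : ℝ) * x ^ (desL 0 (letters π) - 1) else 0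

lemma hasDerivAt_Rsum (e n : ℕ) (x : ℝ) : HasDerivAt (Rsum e n) (RsumDeriv e n x) x := by
  unfold Rsum RsumDeriv
  refine HasDerivAt.fun_sum fun π _ => ?_
  split_ifs
  · exact hasDerivAt_pow _ _
  · exact hasDerivAt_const _ _

/-- Only an insertion in the first gap can change the sign of `π(1)`. -/
lemma sum_insert_split (x : ℝ) (e : ℕ) (c : ℤ) (l : List ℤ) :
    (∑ p ∈ range (l.length + 1), if firstDes 0 (l.insertIdx p c) = e then
        wt x false 0 (l.insertIdx p c) else 0) =
      (if firstDes 0 [c] = e then wt x false 0 (c :: l) else 0) +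
      (if firstDes 0 l = e then
        (∑ p ∈ range (l.length + 1), wt x false 0 (l.insertIdx p c)) - wt x false 0 (c :: l)
        else 0) := by
  rw [sum_range_succ', sum_range_succ', add_comm]
  congr 1
  simp only [List.insertIdx_zero, add_sub_cancel_right]
  cases l with
  | nil => simp
  | cons b l =>
    simp only [List.insertIdx_succ_cons, firstDes_cons]
    by_cases h : (if b < 0 then 1 else 0) = e
    · simp [h]
    · simp [h]

lemma firstDes_eq_zero_or_one (a : ℤ) (l : List ℤ) : firstDes a l = 0 ∨ firstDes a l = 1 := by
  cases l with
  | nil => simp [firstDes]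
  | cons c l => rw [firstDes_cons]; split_ifs <;> simp

lemma wt_max_cons (x : ℝ) (N : ℤ) (l : List ℤ) (hN : 0 < N) (hl : ∀ b ∈ l, b < N)
    (hok : okL false 0 l = true) (h : firstDes 0 l = 1) :
    wt x false 0 (N :: l) = x ^ desL 0 l := by
  cases l with
  | nil => simp [firstDes] at h
  | cons b l =>
    have hb : b < 0 := by simpa [firstDes_cons] using h
    have hbN : b < N := hl b (by simp)
    simp only [okL, hb, decide_true] at hok
    simp_all [wt, okL, desL, hN.not_gt]

lemma wt_min_cons (x : ℝ) (N : ℤ) (l : List ℤ) (hN : 0 < N) (hl : ∀ b ∈ l, -N < b)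
    (hok : okL false 0 l = true) (h : firstDes 0 l = 0) :
    wt x false 0 (-N :: l) = x ^ (desL 0 l + 1) := by
  cases l with
  | nil => simp [wt, okL, desL, hN]
  | cons b l =>
    have hb : ¬ b < 0 := by simpa [firstDes_cons] using h
    have hbN : ¬ b < -N := (hl b (by simp)).not_gt
    have hok' : okL false b l = true := by simpa [okL, hb] using hok
    simp [wt, okL, desL, hN, hb, hbN, hok', add_comm]

/-- The total contribution to `Rsum e (n + 1)` of the permutations obtained from `π` by inserting
`n + 1` or `-(n + 1)`. -/
lemma Rsum_rec_aux {n : ℕ} (x : ℝ) (π : SignedPerm n) (hπ : IsSimsun π) (e : ℕ) :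
    (∑ p ∈ range (n + 1), if firstDes 0 ((letters π).insertIdx p ((n : ℤ) + 1)) = e then
          wt x false 0 ((letters π).insertIdx p ((n : ℤ) + 1)) else 0) +
      (∑ p ∈ range (n + 1), if firstDes 0 ((letters π).insertIdx p (-((n : ℤ) + 1))) = e then
          wt x false 0 ((letters π).insertIdx p (-((n : ℤ) + 1))) else 0) =
    (if e = 0 then
      if firstDes 0 (letters π) = 0 then
        (2 * desL 0 (letters π) + 1) * x ^ desL 0 (letters π) +
          (2 * n - 4 * desL 0 (letters π)) * x ^ (desL 0 (letters π) + 1)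
      else x ^ desL 0 (letters π)
    else if e = 1 then
      if firstDes 0 (letters π) = 0 then x ^ (desL 0 (letters π) + 1)
      else 2 * desL 0 (letters π) * x ^ desL 0 (letters π) +
          (2 * n + 2 - 4 * desL 0 (letters π)) * x ^ (desL 0 (letters π) + 1)
    else 0) := by
  have hlen : (letters π).length = n := by simp [letters]
  have hok := okL_of_isSimsun hπ
  have hN : (0 : ℤ) < (n : ℤ) + 1 := by positivity
  have hb1 : ∀ b ∈ letters π, b < (n : ℤ) + 1 := fun b hb => by
    have := letters_bound π b hb; omega
  have hb2 : ∀ b ∈ letters π, -((n : ℤ) + 1) < b := fun b hb => by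
    have := letters_bound π b hb; omega
  have s1 := sum_insert_split x e ((n : ℤ) + 1) (letters π)
  have s2 := sum_insert_split x e (-((n : ℤ) + 1)) (letters π)
  rw [sum_insert_max x _ false 0 _ hN hb1 hok] at s1
  rw [sum_insert_min x _ false 0 _ (by omega) hb2 hok] at s2
  have w1 := wt_max_cons x _ _ hN hb1 hok
  have w2 := wt_min_cons x _ _ hN hb2 hok
  rw [hlen] at s1 s2
  rw [s1, s2]
  have f1 : firstDes 0 [(n : ℤ) + 1] = 0 := by simp only [firstDes_cons]; rw [if_neg]; omega
  have f2 : firstDes 0 [-((n : ℤ) + 1)] = 1 := by simp only [firstDes_cons]; rw [if_pos]; omega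
  rw [f1, f2]
  by_cases h0 : e = 0
  · subst h0
    rcases firstDes_eq_zero_or_one 0 (letters π) with h | h
    · simp [h, w2 h, -neg_add_rev]; ring
    · simp [h, w1 h]
  · by_cases h1 : e = 1
    · subst h1
      rcases firstDes_eq_zero_or_one 0 (letters π) with h | h
      · simp [h, w2 h, -neg_add_rev]
      · simp [h, w1 h]; ring
    · rcases firstDes_eq_zero_or_one 0 (letters π) with h | h <;>
        simp [h, h0, h1, Ne.symm h0, Ne.symm h1]

/-- Rewrites `x` times the derivative of `x ^ k` without the truncated exponent `k - 1`. -/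
lemma mul_pow_pred (k : ℕ) (x : ℝ) : x * ((k : ℝ) * x ^ (k - 1)) = k * x ^ k := by
  cases k with
  | zero => simp
  | succ k => simp [pow_succ]; ring

/-- `R⁺_{n+1} = (1 + 2 n x) R⁺_n + 2 x (1 - 2 x) R⁺_n' + R⁻_n`. -/
lemma Rsum_zero_succ (n : ℕ) (x : ℝ) :
    Rsum 0 (n + 1) x = (1 + 2 * n * x) * Rsum 0 n x + 2 * x * (1 - 2 * x) * RsumDeriv 0 n x
      + Rsum 1 n x := by
  rw [Rsum_succ]
  unfold Rsum RsumDeriv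
  rw [mul_sum, mul_sum, ← sum_add_distrib, ← sum_add_distrib]
  refine sum_congr rfl fun π _ => ?_
  by_cases hπ : IsSimsun π
  · rw [if_pos hπ, Rsum_rec_aux x π hπ]
    have hk := mul_pow_pred (desL 0 (letters π)) x
    rcases firstDes_eq_zero_or_one 0 (letters π) with h | h
    · simp only [h, hπ, if_true, true_and, zero_ne_one, if_false, and_self]
      linear_combination (-2 + 4 * x) * hk
    · simp [h, hπ]
  · simp [hπ]

/-- `R⁻_{n+1} = x R⁺_n + (2 n + 2) x R⁻_n + 2 x (1 - 2 x) R⁻_n'`. -/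
lemma Rsum_one_succ (n : ℕ) (x : ℝ) :
    Rsum 1 (n + 1) x = x * Rsum 0 n x + (2 * n + 2) * x * Rsum 1 n x
      + 2 * x * (1 - 2 * x) * RsumDeriv 1 n x := by
  rw [Rsum_succ]
  unfold Rsum RsumDeriv
  rw [mul_sum, mul_sum, mul_sum, ← sum_add_distrib, ← sum_add_distrib]
  refine sum_congr rfl fun π _ => ?_
  by_cases hπ : IsSimsun π
  · rw [if_pos hπ, Rsum_rec_aux x π hπ]
    have hk := mul_pow_pred (desL 0 (letters π)) x
    rcases firstDes_eq_zero_or_one 0 (letters π) with h | h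
    · simp [h, hπ, pow_succ, mul_comm]
    · simp only [h, hπ, if_true, one_ne_zero, if_false, and_self, and_false]
      linear_combination (-2 + 4 * x) * hk
  · simp [hπ]

lemma Rsum_rank_zero (x : ℝ) : Rsum 0 0 x = 1 ∧ Rsum 1 0 x = 0 := by
  have h : ∀ π : SignedPerm 0, IsSimsun π := by decide
  simp [Rsum, h, letters, firstDes, desL]

/-! ### The closed form -/

open Real in
lemma sin_cos_signs {y : ℝ} (hy : y ∈ Set.Ioo (-(π / 2)) 0) : sin y < 0 ∧ 0 < cos y :=
  ⟨sin_neg_of_neg_of_neg_pi_lt hy.2 (by linarith [hy.1, pi_pos]),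
   cos_pos_of_mem_Ioo ⟨hy.1, by linarith [hy.2, pi_pos]⟩⟩

/-- The power `(-sin y / (1 + cos y)) ^ r`, i.e. `tan (-y / 2) ^ r`. -/
noncomputable def Tpow (r y : ℝ) : ℝ := (-Real.sin y / (1 + Real.cos y)) ^ r

lemma Tpow_base_pos {y : ℝ} (hy : y ∈ Set.Ioo (-(Real.pi / 2)) 0) :
    0 < -Real.sin y / (1 + Real.cos y) := by
  obtain ⟨h1, h2⟩ := sin_cos_signs hy
  exact div_pos (by linarith) (by linarith)

lemma Tpow_mul_neg {r y : ℝ} (hy : y ∈ Set.Ioo (-(Real.pi / 2)) 0) :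
    Tpow r y * Tpow (-r) y = 1 := by
  unfold Tpow
  rw [← Real.rpow_add (Tpow_base_pos hy), add_neg_cancel, Real.rpow_zero]

lemma hasDerivAt_Tpow (r : ℝ) {y : ℝ} (hy : y ∈ Set.Ioo (-(Real.pi / 2)) 0) :
    HasDerivAt (Tpow r) (r * Tpow r y / Real.sin y) y := by
  obtain ⟨h1, h2⟩ := sin_cos_signs hy
  have hb := Tpow_base_pos hy
  have h3 : (1 + Real.cos y) ≠ 0 := by linarith
  have h := ((Real.hasDerivAt_sin y).neg.div ((Real.hasDerivAt_cos y).const_add 1) h3).rpow_const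
    (p := r) (Or.inl hb.ne')
  refine h.congr_deriv ?_
  simp only [Pi.neg_apply, Pi.div_apply]
  unfold Tpow
  rw [Real.rpow_sub_one hb.ne']
  have hs := h1.ne
  generalize (-Real.sin y / (1 + Real.cos y)) ^ r = P
  field_simp
  linear_combination (r * P) * Real.sin_sq_add_cos_sq y

lemma Ffun₁_eq (y : ℝ) : Ffun₁ y = (-1 / (√2 * Real.sin y)) * Tpow (-(1 / √2)) y := rfl

lemma Ffun₂_eq (y : ℝ) : Ffun₂ y = (-1 / (√2 * Real.sin y)) * Tpow (1 / √2) y := rfl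

lemma analyticAt_Tpow (r : ℝ) {y : ℝ} (hy : y ∈ Set.Ioo (-(Real.pi / 2)) 0) :
    AnalyticAt ℝ (Tpow r) y := by
  obtain ⟨h1, h2⟩ := sin_cos_signs hy
  have h3 : (1 + Real.cos y) ≠ 0 := by linarith
  have hb : AnalyticAt ℝ (fun y => -Real.sin y / (1 + Real.cos y)) y := by
    fun_prop (disch := assumption)
  have h : AnalyticAt ℝ (fun y => Real.exp (Real.log (-Real.sin y / (1 + Real.cos y)) * r)) y :=
    ((hb.log (Tpow_base_pos hy)).mul analyticAt_const).rexp
  refine h.congr ?_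
  filter_upwards [isOpen_Ioo.mem_nhds hy] with z hz
  exact (Real.rpow_def_of_pos (Tpow_base_pos hz) r).symm

lemma analyticAt_factor {y : ℝ} (hy : y ∈ Set.Ioo (-(Real.pi / 2)) 0) :
    AnalyticAt ℝ (fun y => -1 / (√2 * Real.sin y)) y := by
  obtain ⟨h1, h2⟩ := sin_cos_signs hy
  have : √2 * Real.sin y ≠ 0 := mul_ne_zero (by positivity) h1.ne
  fun_prop (disch := assumption)

lemma analyticAt_Ffun₁ {y : ℝ} (hy : y ∈ Set.Ioo (-(Real.pi / 2)) 0) : AnalyticAt ℝ Ffun₁ y :=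
  (analyticAt_factor hy).mul (analyticAt_Tpow _ hy)

lemma analyticAt_Ffun₂ {y : ℝ} (hy : y ∈ Set.Ioo (-(Real.pi / 2)) 0) : AnalyticAt ℝ Ffun₂ y :=
  (analyticAt_factor hy).mul (analyticAt_Tpow _ hy)

lemma hasDerivAt_iteratedDeriv {f : ℝ → ℝ} {y : ℝ} (h : AnalyticAt ℝ f y) (n : ℕ) :
    HasDerivAt (iteratedDeriv n f) (iteratedDeriv (n + 1) f y) y := by
  rw [iteratedDeriv_succ]
  refine DifferentiableAt.hasDerivAt ?_
  rw [iteratedDeriv_eq_iterate]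
  exact (h.iterated_deriv n).differentiableAt

/-- In the coordinate `y` with `2 x = 1 / cos² y`, the operator `2 x (1 - 2 x) d/dx` is
`-tan y d/dy`. -/
lemma deriv_coord (e n : ℕ) {y : ℝ} (hy : y ∈ Set.Ioo (-(Real.pi / 2)) 0) {g : ℝ → ℝ} {g' : ℝ}
    (heq : ∀ z ∈ Set.Ioo (-(Real.pi / 2)) 0, Rsum e n (1 / (2 * Real.cos z ^ 2)) = g z)
    (hg : HasDerivAt g g' y) :
    2 * (1 / (2 * Real.cos y ^ 2)) * (1 - 2 * (1 / (2 * Real.cos y ^ 2))) *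
      RsumDeriv e n (1 / (2 * Real.cos y ^ 2)) = (-Real.sin y / Real.cos y) * g' := by
  obtain ⟨h1, h2⟩ := sin_cos_signs hy
  have hx : HasDerivAt (fun y => 1 / (2 * Real.cos y ^ 2)) (Real.sin y / Real.cos y ^ 3) y := by
    have hc : 2 * Real.cos y ^ 2 ≠ 0 := by positivity
    refine ((hasDerivAt_const y (1 : ℝ)).fun_div
      (((Real.hasDerivAt_cos y).fun_pow 2).const_mul 2) hc).congr_deriv ?_
    field_simp
    norm_num
  have h3 := (hasDerivAt_Rsum e n (1 / (2 * Real.cos y ^ 2))).comp y hx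
  have h4 : g' = RsumDeriv e n (1 / (2 * Real.cos y ^ 2)) * (Real.sin y / Real.cos y ^ 3) := by
    refine hg.unique (h3.congr_of_eventuallyEq ?_)
    filter_upwards [isOpen_Ioo.mem_nhds hy] with z hz
    exact (heq z hz).symm
  rw [h4]
  have hs : Real.sin y ^ 2 = 1 - Real.cos y ^ 2 := by linarith [Real.sin_sq_add_cos_sq y]
  field_simp
  rw [hs]
  ring

/-- The recurrences are solved by `n`-th derivatives of `F₁` and `F₂`. -/
lemma Rsum_closed (n : ℕ) : ∀ y ∈ Set.Ioo (-(Real.pi / 2)) 0,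
    Rsum 0 n (1 / (2 * Real.cos y ^ 2)) =
      (-Real.sin y / Real.cos y) ^ n * (√2 / 2 * -Real.sin y *
        (Tpow (1 / √2) y * iteratedDeriv n Ffun₁ y + Tpow (-(1 / √2)) y * iteratedDeriv n Ffun₂ y)) ∧
    Rsum 1 n (1 / (2 * Real.cos y ^ 2)) =
      (-Real.sin y / Real.cos y) ^ (n + 1) * (1 / 2 *
        (Tpow (1 / √2) y * iteratedDeriv n Ffun₁ y -
          Tpow (-(1 / √2)) y * iteratedDeriv n Ffun₂ y)) := by
  induction n with
  | zero =>
    intro y hy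
    obtain ⟨h1, h2⟩ := sin_cos_signs hy
    have hT := Tpow_mul_neg (r := 1 / √2) hy
    simp only [iteratedDeriv_zero, Rsum_rank_zero, Ffun₁_eq, Ffun₂_eq]
    have h2' : √2 ≠ 0 := by positivity
    have hs := h1.ne
    generalize Tpow (1 / √2) y = T at *
    generalize Tpow (-(1 / √2)) y = T' at *
    constructor
    · field_simp
      linear_combination (-2) * hT
    · ring
  | succ n ih =>
    intro y hy
    obtain ⟨h1, h2⟩ := sin_cos_signs hy
    have hs := h1.ne
    have hs2 : Real.sin y ^ 2 = 1 - Real.cos y ^ 2 := by linarith [Real.sin_sq_add_cos_sq y]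
    have hA := hasDerivAt_iteratedDeriv (analyticAt_Ffun₁ hy) n
    have hB := hasDerivAt_iteratedDeriv (analyticAt_Ffun₂ hy) n
    have hT := hasDerivAt_Tpow (1 / √2) hy
    have hT' := hasDerivAt_Tpow (-(1 / √2)) hy
    have htan : HasDerivAt (fun y => -Real.sin y / Real.cos y) (-1 / Real.cos y ^ 2) y := by
      refine ((Real.hasDerivAt_sin y).fun_neg.fun_div (Real.hasDerivAt_cos y) h2.ne').congr_deriv ?_
      field_simp
      rw [hs2]; ring
    have d0 := deriv_coord 0 n hy (fun z hz => (ih z hz).1) ((htan.fun_pow n).fun_mul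
      (((Real.hasDerivAt_sin y).fun_neg.const_mul (√2 / 2)).fun_mul
        ((hT.fun_mul hA).fun_add (hT'.fun_mul hB))))
    have d1 := deriv_coord 1 n hy (fun z hz => (ih z hz).2) ((htan.fun_pow (n + 1)).fun_mul
      (((hT.fun_mul hA).fun_sub (hT'.fun_mul hB)).const_mul (1 / 2)))
    rw [Rsum_zero_succ, Rsum_one_succ, d0, d1, (ih y hy).1, (ih y hy).2]
    have hp := mul_pow_pred n (-Real.sin y / Real.cos y)
    have hq : 1 / √2 = √2 / 2 := by
      rw [div_eq_div_iff (by positivity) (by norm_num)]; simp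
    have hr : √2 ^ 2 = 2 := by simp
    generalize iteratedDeriv (n + 1) Ffun₁ y = A1 at *
    generalize iteratedDeriv (n + 1) Ffun₂ y = B1 at *
    generalize iteratedDeriv n Ffun₁ y = A at *
    generalize iteratedDeriv n Ffun₂ y = B at *
    generalize Tpow (1 / √2) y = T at *
    generalize Tpow (-(1 / √2)) y = T' at *
    rw [hq]
    clear d0 d1 hT hT' hA hB htan
    simp only [Nat.add_sub_cancel]
    push_cast
    generalize hz : -Real.sin y / Real.cos y = z at *
    have hS : Real.sin y = -(z * Real.cos y) := by rw [← hz]; field_simp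
    have hz0 : z ≠ 0 := by rw [← hz]; exact div_ne_zero (neg_ne_zero.2 hs) h2.ne'
    rw [hS]
    generalize Real.cos y = c at *
    have hc := h2.ne'
    constructor
    -- `hp` removes the truncated exponent `n - 1`, and `hr` reduces `√2 ^ 2`.
    · linear_combination (norm := skip)
        (-1 / c ^ 2) * (√2 / 2 * (z * c) * (T * A + T' * B)) * hp
          - z ^ (n + 1) * (T * A - T' * B) / 4 * hr
      field_simp
      ring
    · field_simp
      ring

lemma exists_hasSum_taylor {f : ℝ → ℝ} {y : ℝ} (h : AnalyticAt ℝ f y) :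
    ∀ᶠ z in nhds (0 : ℝ), HasSum (fun n : ℕ => z ^ n * (iteratedDeriv n f y / n.factorial))
      (f (y + z)) := by
  have := hasFPowerSeriesAt_iff.1 h.hasFPowerSeriesAt
  simpa [FormalMultilinearSeries.coeff_ofScalars] using this

/-- In the coordinate `y`, `√(2 x) = 1 / cos y`, so the base of the power defining `p` is
`(1 + cos y) / (1 - cos y) = tan (-y / 2) ^ (-2)`. -/
lemma pfun_eq {x y : ℝ} (hy : y ∈ Set.Ioo (-(Real.pi / 2)) 0) (hx : x = 1 / (2 * Real.cos y ^ 2)) :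
    pfun x = Tpow (-(1 / √2)) y := by
  obtain ⟨h1, h2⟩ := sin_cos_signs hy
  have hc1 : Real.cos y < 1 := by nlinarith [Real.sin_sq_add_cos_sq y]
  have hsq : √(2 * x) = 1 / Real.cos y := by
    rw [show 2 * x = (1 / Real.cos y) ^ 2 by rw [hx]; field_simp]
    exact Real.sqrt_sq (by positivity)
  have hb := Tpow_base_pos hy
  have hbase : (√(2 * x) + 1) / (√(2 * x) - 1) =
      (-Real.sin y / (1 + Real.cos y)) ^ (-2 : ℝ) := by
    rw [hsq, Real.rpow_neg hb.le, Real.rpow_two, ← inv_pow, inv_div, div_pow, neg_sq]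
    have hs : Real.sin y ^ 2 = (1 - Real.cos y) * (1 + Real.cos y) := by
      linarith [Real.sin_sq_add_cos_sq y]
    have h3 : 1 - Real.cos y ≠ 0 := by linarith
    have h4 : 1 + Real.cos y ≠ 0 := by linarith
    rw [hs]
    field_simp
  unfold pfun Tpow
  rw [hbase, ← Real.rpow_mul hb.le]
  congr 1
  rw [show 1 / √2 = √2 / 2 by rw [div_eq_div_iff (by positivity) (by norm_num)]; simp]
  ring

/-- The exponential generating function of the `R⁻_n(x)`:
`Σ R⁻_n(x) tⁿ/n! = (−√(2x−1)/(2p))·(p²F₂(u(t)) − F₁(u(t)))` for `t` near `0`. -/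
theorem stmt6 (x : ℝ) (hx : 1 / 2 < x) :
    ∃ ε > 0, ∀ t : ℝ, |t| < ε →
      HasSum (fun n : ℕ => RmReal n x * t ^ n / (Nat.factorial n : ℝ))
        (-Real.sqrt (2 * x - 1) / (2 * pfun x) *
          ((pfun x) ^ 2 * Ffun₂ (ufun x t) - Ffun₁ (ufun x t))) := by
  have hs0 : 0 < √(2 * x - 1) := Real.sqrt_pos.2 (by linarith)
  have hs2 : √(2 * x - 1) ^ 2 = 2 * x - 1 := Real.sq_sqrt (by linarith)
  -- `y = u(0)` is the point of expansion; there `2 x = 1 / cos² y` and `-tan y = √(2 x - 1)`.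
  obtain ⟨y, hydef⟩ : ∃ y, y = -Real.arctan √(2 * x - 1) := ⟨_, rfl⟩
  have hy : y ∈ Set.Ioo (-(Real.pi / 2)) 0 := by
    have h1 := Real.arctan_lt_pi_div_two √(2 * x - 1)
    have h2 : 0 < Real.arctan √(2 * x - 1) := Real.arctan_pos.2 hs0
    constructor <;> linarith
  have hcos : x = 1 / (2 * Real.cos y ^ 2) := by
    rw [hydef, Real.cos_neg, Real.cos_sq_arctan, hs2]
    field_simp
    ring
  have htan : -Real.sin y / Real.cos y = √(2 * x - 1) := by
    rw [hydef, Real.cos_neg, Real.sin_neg, neg_neg, ← Real.tan_eq_sin_div_cos, Real.tan_arctan]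
  have hu : ∀ t, ufun x t = y + √(2 * x - 1) * t := fun t => by
    rw [hydef, ufun]; ring
  have hp := pfun_eq hy hcos
  have hTT := Tpow_mul_neg (r := 1 / √2) hy
  rw [← hp] at hTT
  have hp0 : pfun x ≠ 0 := right_ne_zero_of_mul_eq_one hTT
  have hT : Tpow (1 / √2) y = 1 / pfun x := eq_one_div_of_mul_eq_one_left hTT
  obtain ⟨δ, hδ, hball⟩ := Metric.eventually_nhds_iff.1
    ((exists_hasSum_taylor (analyticAt_Ffun₁ hy)).and (exists_hasSum_taylor (analyticAt_Ffun₂ hy)))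
  refine ⟨δ / √(2 * x - 1), by positivity, fun t ht => ?_⟩
  have hz : dist (√(2 * x - 1) * t) 0 < δ := by
    rw [Real.dist_eq, sub_zero, abs_mul, abs_of_pos hs0]
    rwa [lt_div_iff₀ hs0, mul_comm] at ht
  obtain ⟨hA, hB⟩ := hball hz
  rw [hu]
  have hsum := ((hB.mul_left (pfun x ^ 2)).sub hA).mul_left (-√(2 * x - 1) / (2 * pfun x))
  have hfun : (fun n : ℕ => RmReal n x * t ^ n / (Nat.factorial n : ℝ)) = fun n : ℕ =>
      -√(2 * x - 1) / (2 * pfun x) *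
        (pfun x ^ 2 * ((√(2 * x - 1) * t) ^ n * (iteratedDeriv n Ffun₂ y / n.factorial)) -
          (√(2 * x - 1) * t) ^ n * (iteratedDeriv n Ffun₁ y / n.factorial)) := by
    funext n
    have hR := (Rsum_closed n y hy).2
    rw [← hcos, htan, ← hp, hT] at hR
    rw [RmReal_eq, hR]
    field_simp
    ring
  rw [hfun]
  exact hsum
end

section
/- For all integers n ≥ 1 and k ≥ 0 one has (in ℤ): D⁻(n,k) = k·R⁻(n−1,k) + (n−2k+2)·R⁻(n−1,k−1) + T⁺(n−1,k−1), where terms with second argument −1 vanish. -/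
/-!
Every signed permutation of rank `m + 1` arises uniquely from one, `π`, of rank `m` by inserting
`m + 1` or `-(m+1)` into its word (`ins_bijective`). The result is simsun iff `π` is simsun and the
new word has no double descent (`isSimsun_ins`), and it is even-signed iff the sign of the new entry
matches the parity of `π` (`isEvenSigned_ins`): a positive entry for even `π`, a negative one for
odd `π`. So each `π` contributes insertions of a single sign, and the recurrence follows by counting
them according to the descent number (`sum_ins`). Let `d = des_B(π)`.

* If `π(1) < 0` and `π` is odd-signed, `-(m+1)` can go into any of the `d` descent gaps (keeping
  `d`) and into `m + 1 - 2d` of the other gaps (raising `d` by one): `sum_insert_neg`.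
* If `π(1) < 0` and `π` is even-signed, `m + 1` must not be put in front, and the counts are again
  `d` and `m + 1 - 2d`: `sum_insert_pos`, `sum_insert_pos_succ`.
* If `π(1) > 0` or `m = 0`, the result has a negative first entry only if `-(m+1)` is put in front,
  which is possible exactly for odd-signed `π`, and raises `d` by one.

The first two cases together give the terms with `R⁻`, the last one gives `T⁺`.
-/

open Finset

/-! ### Words: descents and insertion of an extreme letter -/

/-- The number of descents of a word. -/
def des : List ℤ → ℕ
  | a :: b :: l => (if b < a then 1 else 0) + des (b :: l)
  | _ => 0

/-- The first letter of `l` exists and is smaller than `a`, i.e. the word `a l` starts with a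
descent. -/
def FD (a : ℤ) (l : List ℤ) : Prop := ∃ c ∈ l.head?, c < a

lemma noDD_cons_cons (a b : ℤ) (l : List ℤ) :
    noDD (a :: b :: l) = true ↔ (b < a → ¬ FD b l) ∧ noDD (b :: l) = true := by
  cases l with
  | nil => simp [noDD, FD]
  | cons c l =>
    simp only [noDD, FD, List.head?_cons, Option.mem_def, Option.some.injEq, exists_eq_left',
      Bool.and_eq_true, Bool.not_eq_true', Bool.and_eq_false_iff, decide_eq_false_iff_not]
    tauto

lemma des_cons_cons (a b : ℤ) (l : List ℤ) :
    des (a :: b :: l) = (if b < a then 1 else 0) + des (b :: l) := rfl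

@[simp] lemma des_single (a : ℤ) : des [a] = 0 := rfl
@[simp] lemma noDD_single (a : ℤ) : noDD [a] = true := rfl

lemma FD_insertIdx (b x : ℤ) (hx : b < x) (t : List ℤ) (ht : ¬ FD b t) (p : ℕ) :
    ¬ FD b (t.insertIdx p x) := by
  cases p with
  | zero => simp [FD]; omega
  | succ p =>
    cases t with
    | nil => simp [FD]
    | cons c t => simpa [FD] using ht

open Classical in
/-- Inserting a new maximum `M` after the leading letter of a word without double descents.
In a descent gap or at the end, the insertion is always admissible and keeps `des`; in an ascent
gap it raises `des` by one, and is admissible unless the next gap is a descent. As every descent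
other than one in the first gap is preceded by an ascent, this leaves
`length - 2 des + [first gap is a descent]` gaps of the second kind.
The function `f` is arbitrary, so the identity records the distribution of `des`. -/
lemma sum_insert_pos (M : ℤ) (t : List ℤ) : ∀ (a : ℤ) (f : ℕ → ℤ),
    (∀ y ∈ a :: t, y < M) → noDD (a :: t) = true →
    ∑ p ∈ range (t.length + 1),
      (if noDD (a :: t.insertIdx p M) = true then f (des (a :: t.insertIdx p M)) else 0) =
    ((des (a :: t) : ℤ) + 1) * f (des (a :: t)) +
      ((t.length : ℤ) - 2 * des (a :: t) + (if FD a t then 1 else 0)) *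
        f (des (a :: t) + 1) := by
  induction t with
  | nil =>
    intro a f hM _
    have : a < M := by simpa using hM
    simp [noDD, des, FD, this.not_gt]
  | cons b t ih =>
    intro a f hM hD
    have ha : a < M := hM a (by simp)
    have hb : b < M := hM b (by simp)
    have hM' : ∀ y ∈ b :: t, y < M := fun y hy => hM y (List.mem_cons_of_mem _ hy)
    rw [noDD_cons_cons] at hD
    obtain ⟨h1, h2⟩ := hD
    rw [List.length_cons, sum_range_succ']
    simp only [List.insertIdx_zero, List.insertIdx_succ_cons]
    have hFM : ¬ FD a (M :: b :: t) := by simp [FD]; omega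
    have hFb : FD a (b :: t) ↔ b < a := by simp [FD]
    by_cases hba : b < a
    · have ht := h1 hba
      have := ih b (fun d => f (1 + d)) hM' h2
      simp only [noDD_cons_cons, des_cons_cons, hba, hb, ha.not_gt, h2, ht, hFb,
        FD_insertIdx b M hb t ht] at this ⊢
      simp only [if_true, if_false, not_false_eq_true, implies_true, true_and, false_implies,
        and_true, zero_add] at this ⊢
      rw [this]
      push_cast
      rw [show 1 + (des (b :: t) + 1) = 1 + des (b :: t) + 1 by ring]
      ring
    · have := ih b f hM' h2
      simp only [noDD_cons_cons, des_cons_cons, hba, hb, ha.not_gt, h2, hFb] at this ⊢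
      simp only [if_true, if_false, true_implies, true_and, false_implies, and_true,
        zero_add] at this ⊢
      rw [this]
      push_cast
      rw [add_comm 1 (des _)]
      by_cases ht : FD b t <;>
        simp only [ht, not_true_eq_false, not_false_eq_true, if_true, if_false] <;> ring

open Classical in
/-- Inserting a new minimum `M` after the leading letter of a word without double descents.
In a descent gap, the insertion is admissible and keeps `des`; in an ascent gap or at the end it
raises `des` by one, and is admissible unless the previous gap is a descent. Every descent is
followed by an ascent or the end, which leaves `length + 1 - 2 des` gaps of the second kind. -/
lemma sum_insert_neg (M : ℤ) (t : List ℤ) : ∀ (a : ℤ) (f : ℕ → ℤ),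
    (∀ y ∈ a :: t, M < y) → noDD (a :: t) = true →
    ∑ p ∈ range (t.length + 1),
      (if noDD (a :: t.insertIdx p M) = true then f (des (a :: t.insertIdx p M)) else 0) =
    (des (a :: t) : ℤ) * f (des (a :: t)) +
      ((t.length : ℤ) + 1 - 2 * des (a :: t)) * f (des (a :: t) + 1) := by
  induction t with
  | nil =>
    intro a f hM _
    have : M < a := by simpa using hM
    simp [noDD, des, this]
  | cons b t ih =>
    intro a f hM hD
    have ha : M < a := hM a (by simp)
    have hb : M < b := hM b (by simp)
    have hM' : ∀ y ∈ b :: t, M < y := fun y hy => hM y (List.mem_cons_of_mem _ hy)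
    rw [noDD_cons_cons] at hD
    obtain ⟨h1, h2⟩ := hD
    rw [List.length_cons, sum_range_succ']
    simp only [List.insertIdx_zero, List.insertIdx_succ_cons]
    have hFM : ¬ FD M (b :: t) := by simp [FD]; omega
    have hFb : FD b (M :: t) := by simp [FD]; omega
    by_cases hba : b < a
    · have ht := h1 hba
      have := ih b (fun d => f (1 + d)) hM' h2
      -- The insertion right after `b` now creates the double descent `a > b > M`; its summand in
      -- the induction hypothesis must be removed, so its value is computed first.
      have hd : des (M :: t) = des (b :: t) ∧ noDD (M :: t) = true ∧ ¬ FD M t := by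
        cases t with
        | nil => simp [FD]
        | cons c t =>
          have hc : ¬ c < b := by simpa [FD] using ht
          have hcM : ¬ c < M := by have := hM' c (by simp); omega
          rw [noDD_cons_cons] at h2 ⊢
          simp [des_cons_cons, hc, hcM, h2.2, FD]
      have hS : ∀ p, noDD (a :: b :: t.insertIdx (p + 1) M) =
          noDD (b :: t.insertIdx (p + 1) M) := by
        intro p
        rw [Bool.eq_iff_iff, noDD_cons_cons]
        cases t with
        | nil => simp [FD]
        | cons c t => simpa [FD] using fun _ _ => by simpa [FD] using ht
      rw [sum_range_succ'] at this ⊢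
      simp only [hS]
      simp only [List.insertIdx_zero, noDD_cons_cons, des_cons_cons, hba, hb, ha, hb.not_gt, h2, hd,
        hFM, hFb] at this ⊢
      simp at this ⊢
      rw [show 1 + (des (b :: t) + 1) = 1 + des (b :: t) + 1 by ring] at this
      rw [show 1 + (1 + des (b :: t)) = 1 + des (b :: t) + 1 by ring] at this
      linear_combination this
    · have := ih b f hM' h2
      simp only [noDD_cons_cons, des_cons_cons, hba, ha, hb.not_gt, h2, hFM] at this ⊢
      simp only [if_true, if_false, not_false_eq_true, implies_true, true_and, false_implies,
        and_true, zero_add] at this ⊢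
      rw [this]
      push_cast
      rw [add_comm 1 (des _)]
      ring

/-! ### Insertion of the largest entry into a signed permutation -/

/-- The signed permutation of rank `m + 1` obtained from `π` by inserting, at position `p` of the
word `π(1)⋯π(m)`, the entry `-(m+1)` if `s` is true and `m+1` otherwise. -/
def ins {m : ℕ} (π : SignedPerm m) (p : Fin (m + 1)) (s : Bool) : SignedPerm (m + 1) :=
  (((finSuccEquiv' p).trans (Equiv.optionCongr π.1)).trans (finSuccEquiv' (Fin.last m)).symm,
    p.insertNth (α := fun _ => Bool) s π.2)

/-- The entry inserted by `ins`. -/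
def newEntry (m : ℕ) (s : Bool) : ℤ := (if s then -1 else 1) * ((m : ℤ) + 1)

section
variable {m : ℕ} (π : SignedPerm m) (p : Fin (m + 1)) (s : Bool)

lemma ins_fst_self : (ins π p s).1 p = Fin.last m := by simp [ins]

lemma ins_fst_succAbove (j : Fin m) : (ins π p s).1 (p.succAbove j) = (π.1 j).castSucc := by
  simp [ins]

lemma ins_snd_self : (ins π p s).2 p = s := by simp [ins]

lemma ins_snd_succAbove (j : Fin m) : (ins π p s).2 (p.succAbove j) = π.2 j := by simp [ins]

lemma entry_ins :
    entry (ins π p s) = p.insertNth (α := fun _ => ℤ) (newEntry m s) (entry π) := by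
  rw [Fin.eq_insertNth_iff]
  refine ⟨?_, funext fun j => ?_⟩
  · simp [entry, newEntry, ins_fst_self, ins_snd_self]
  · simp [entry, Fin.removeNth, ins_fst_succAbove, ins_snd_succAbove]

lemma ofFn_insertNth (x : ℤ) (f : Fin m → ℤ) :
    List.ofFn (p.insertNth (α := fun _ => ℤ) x f) = (List.ofFn f).insertIdx p x := by
  have hp : (p : ℕ) ≤ m := by omega
  apply List.ext_getElem
  · simp [List.length_insertIdx, hp]
  · intro i h1 h2
    rw [List.length_ofFn] at h1
    rw [List.getElem_insertIdx, List.getElem_ofFn]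
    rcases Fin.eq_self_or_eq_succAbove p ⟨i, h1⟩ with h | ⟨j, h⟩
    · have : i = p := by rw [← h]
      simp [this]
    · rw [h, Fin.insertNth_apply_succAbove]
      have hi : i = (p.succAbove j : ℕ) := by rw [← h]
      by_cases hjp : j.castSucc < p
      · rw [Fin.succAbove_of_castSucc_lt _ _ hjp] at hi
        have : i < p := by rw [hi]; exact hjp
        simp [this]
        simp [hi]
      · rw [Fin.succAbove_of_le_castSucc _ _ (not_lt.mp hjp)] at hi
        have h3 : (p : ℕ) ≤ j := not_lt.mp hjp
        simp only [Fin.val_succ] at hi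
        have h4 : ¬ i < p := by omega
        have h5 : ¬ i = p := by omega
        simp [h4, h5]
        simp [hi]

lemma word_ins : word (ins π p s) = 0 :: (List.ofFn (entry π)).insertIdx p (newEntry m s) := by
  rw [word, entry_ins, ofFn_insertNth]

lemma natAbs_newEntry : (newEntry m s).natAbs = m + 1 := by
  cases s <;> simp [newEntry] <;> omega

lemma natAbs_entry_le (j : Fin m) : (entry π j).natAbs ≤ m := by
  have := (π.1 j).isLt
  unfold entry
  split_ifs <;> omega

lemma natAbs_word_le : ∀ a ∈ word π, a.natAbs ≤ m := by
  intro a ha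
  rw [word, List.mem_cons, List.mem_ofFn'] at ha
  rcases ha with rfl | ⟨j, rfl⟩
  · simp
  · exact natAbs_entry_le π j

lemma filter_insertIdx (P : ℤ → Bool) (x : ℤ) (hx : P x = false) (l : List ℤ) (q : ℕ) :
    (l.insertIdx q x).filter P = l.filter P := by
  induction l generalizing q with
  | nil => cases q <;> simp [hx]
  | cons a l ih => cases q <;> simp [hx, List.filter_cons, ih]

/-- Deleting entries of absolute value above `k ≤ m` also deletes the inserted one, so the only new
simsun condition is the one for the whole word. -/
lemma isSimsun_ins :
    IsSimsun (ins π p s) ↔ IsSimsun π ∧ noDD (word (ins π p s)) = true := by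
  have h1 : ∀ k ≤ m, (word (ins π p s)).filter (fun a => a.natAbs ≤ k) =
      (word π).filter (fun a => a.natAbs ≤ k) := by
    intro k hk
    rw [word_ins, word, List.filter_cons, List.filter_cons, filter_insertIdx]
    simp [natAbs_newEntry]; omega
  have h2 : (word (ins π p s)).filter (fun a => a.natAbs ≤ m + 1) = word (ins π p s) := by
    rw [List.filter_eq_self]
    intro a ha
    simpa using natAbs_word_le _ a ha
  constructor
  · intro h
    refine ⟨fun k hk => ?_, ?_⟩
    · rw [← h1 k hk]; exact h k (by omega)
    · rw [← h2]; exact h (m + 1) le_rfl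
  · rintro ⟨h, h'⟩ k hk
    rcases Nat.le_succ_iff.mp hk with hk | rfl
    · rw [h1 k hk]; exact h k hk
    · rw [h2]; exact h'

lemma noDD_word (h : IsSimsun π) : noDD (word π) = true := by
  have := h m le_rfl
  rwa [List.filter_eq_self.mpr] at this
  intro a ha
  simpa using natAbs_word_le _ a ha

lemma wordFn_eq_getD (i : ℕ) : wordFn π i = (word π).getD i 0 := by
  cases i with
  | zero => simp [wordFn, word]
  | succ i =>
    by_cases h : i < m
    · simp [wordFn, word, Nat.succ_le_of_lt h]
    · simp [wordFn, word, h]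

lemma card_descents (a : ℤ) (l : List ℤ) :
    ((range l.length).filter
      (fun i => (a :: l).getD (i + 1) 0 < (a :: l).getD i 0)).card = des (a :: l) := by
  induction l generalizing a with
  | nil => simp
  | cons b l ih =>
    rw [des_cons_cons, ← ih b, card_filter, card_filter, List.length_cons, sum_range_succ',
      add_comm]
    simp

lemma desB_eq_des : desB π = des (word π) := by
  rw [word, ← card_descents, desB]
  simp [wordFn_eq_getD, word]

lemma wordFn_one_s9 : wordFn π 1 = (List.ofFn (entry π)).headD 0 := by
  rw [wordFn_eq_getD, word]
  cases List.ofFn (entry π) <;> simp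

/-- Inserting a positive entry preserves the parity of the signs, a negative one flips it. -/
lemma isEvenSigned_ins : IsEvenSigned (ins π p s) ↔ (IsEvenSigned π ↔ s = false) := by
  unfold IsEvenSigned
  rw [card_filter, card_filter, Fin.sum_univ_succAbove _ p]
  simp only [ins_snd_self, ins_snd_succAbove]
  cases s <;> simp <;> omega

/-- The first letter is never zero in positive rank, and the junk value `wordFn π 1 = 0` in rank `0`
makes the convention for the empty permutation fit. -/
lemma pos_or_rank_zero_iff : (0 < wordFn π 1 ∨ m = 0) ↔ ¬ wordFn π 1 < 0 := by
  cases m with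
  | zero => simp [wordFn]
  | succ m =>
    simp only [wordFn, entry]
    split_ifs <;> simp <;> omega

end

/-- Every signed permutation of rank `m + 1` arises exactly once by insertion. -/
lemma ins_bijective (m : ℕ) :
    Function.Bijective (fun x : SignedPerm m × Bool × Fin (m + 1) => ins x.1 x.2.2 x.2.1) := by
  rw [Fintype.bijective_iff_injective_and_card]
  constructor
  · rintro ⟨π, s, p⟩ ⟨π', s', p'⟩ h
    simp only at h
    have hp : p = p' := by
      have h1 := ins_fst_self π p s
      rw [h, ← ins_fst_self π' p' s'] at h1
      exact (ins π' p' s').1.injective h1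
    subst hp
    have hs : s = s' := by rw [← ins_snd_self π p s, h, ins_snd_self]
    subst hs
    have h1 : π.1 = π'.1 := by
      ext j
      have := ins_fst_succAbove π p s j
      rw [h, ins_fst_succAbove, Fin.castSucc_inj] at this
      rw [this]
    have h2 : π.2 = π'.2 := by
      ext j
      rw [← ins_snd_succAbove π p s j, h, ins_snd_succAbove]
    rw [Prod.ext h1 h2]
  · simp [Fintype.card_perm, Nat.factorial_succ, pow_succ]
    ring

open Classical in
/-- The case of a word `0 b ⋯` with `b < 0` in which the new maximum may not be put in front of
`b`: the excluded gap is a descent, so it accounts for one of the `des + 1` gaps of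
`sum_insert_pos` that keep the descent number. -/
lemma sum_insert_pos_succ (M b : ℤ) (t : List ℤ) (f : ℕ → ℤ) (hb : b < 0) (hM0 : 0 < M)
    (hM : ∀ y ∈ b :: t, y < M) (hD : noDD (0 :: b :: t) = true) :
    ∑ p ∈ range (t.length + 1), (if noDD (0 :: b :: t.insertIdx p M) = true then
      f (des (0 :: b :: t.insertIdx p M)) else 0) =
    (des (0 :: b :: t) : ℤ) * f (des (0 :: b :: t)) +
      ((t.length : ℤ) + 2 - 2 * des (0 :: b :: t)) * f (des (0 :: b :: t) + 1) := by
  have h := sum_insert_pos M (b :: t) 0 f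
    (by simpa only [List.forall_mem_cons] using And.intro hM0 (by simpa using hM)) hD
  rw [List.length_cons, sum_range_succ'] at h
  have hbM : b < M := hM b (by simp)
  have h0 : noDD (0 :: M :: b :: t) = true := by
    rw [noDD_cons_cons] at hD
    rw [noDD_cons_cons, noDD_cons_cons]
    exact ⟨fun h => absurd h (by omega), fun _ => hD.1 hb, hD.2⟩
  have hd0 : des (0 :: M :: b :: t) = des (0 :: b :: t) := by
    simp [des_cons_cons, hb, hbM, hM0.not_gt]
  have hF : FD 0 (b :: t) := by simpa [FD] using hb
  simp only [List.insertIdx_zero, List.insertIdx_succ_cons, h0, hd0, hF, if_true] at h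
  push_cast at h
  refine add_right_cancel (b := f (des (0 :: b :: t))) ((Eq.trans ?_ h).trans (by ring))
  congr!

/-! ### The recurrence -/

open Classical in
/-- The recurrence, fibrewise: the number of even-signed simsun insertions into `π` with negative
first entry and `k` descents. -/
lemma sum_ins {m : ℕ} (π : SignedPerm m) (k : ℤ) :
    ∑ s : Bool, ∑ p : Fin (m + 1),
      (if IsSimsun (ins π p s) ∧ IsEvenSigned (ins π p s) ∧ wordFn (ins π p s) 1 < 0 ∧
        (desB (ins π p s) : ℤ) = k then (1 : ℤ) else 0) =
    k * (if IsSimsun π ∧ wordFn π 1 < 0 ∧ (desB π : ℤ) = k then 1 else 0) +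
    ((m : ℤ) + 1 - 2 * k + 2) *
      (if IsSimsun π ∧ wordFn π 1 < 0 ∧ (desB π : ℤ) = k - 1 then 1 else 0) +
    (if IsSimsun π ∧ ¬ IsEvenSigned π ∧ ¬ wordFn π 1 < 0 ∧ (desB π : ℤ) = k - 1
      then 1 else 0) := by
  by_cases hS : IsSimsun π
  swap
  · simp [isSimsun_ins, hS]
  have hD := noDD_word π hS
  have hab := natAbs_word_le π
  have hlen : (List.ofFn (entry π)).length = m := List.length_ofFn
  simp only [isSimsun_ins, isEvenSigned_ins, wordFn_one_s9, desB_eq_des, hS, true_and]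
  have he : ∀ p s, List.ofFn (entry (ins π p s)) =
      (List.ofFn (entry π)).insertIdx p (newEntry m s) := fun p s => by
    rw [entry_ins, ofFn_insertNth]
  simp only [he, word_ins]
  rw [word] at hab hD ⊢
  generalize List.ofFn (entry π) = t at hab hD hlen ⊢
  set f : ℕ → ℤ := fun d => if (d : ℤ) = k then 1 else 0 with hf
  set d := des (0 :: t) with hd
  have hpos : newEntry m false = m + 1 := by simp [newEntry]
  have hneg : newEntry m true = -(m + 1) := by simp [newEntry]
  have hsum : ∀ F : ℕ → ℤ, ∑ p : Fin (m + 1), F p = ∑ p ∈ range (t.length + 1), F p := by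
    intro F
    rw [hlen, Finset.sum_range]
  rw [Fintype.sum_bool]
  have hltP : ∀ y ∈ (0 : ℤ) :: t, y < (m : ℤ) + 1 := fun y hy => by
    have := hab y hy; omega
  have hltN : ∀ y ∈ (0 : ℤ) :: t, -((m : ℤ) + 1) < y := fun y hy => by
    have := hab y hy; omega
  have hm : (m : ℤ) = t.length := by exact_mod_cast hlen.symm
  have hfd : ((if (d : ℤ) = k then 1 else 0 : ℤ)) = f d := rfl
  have hfd1 : ((if (d : ℤ) = k - 1 then 1 else 0 : ℤ)) = f (d + 1) := by
    simp only [hf]; push_cast; congr 1; rw [eq_sub_iff_add_eq]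
  have hk0 : k * f d = d * f d := by
    simp only [hf]; split_ifs with h <;> simp [h]
  have hk1 : k * f (d + 1) = (d + 1) * f (d + 1) := by
    simp only [hf]; push_cast; split_ifs with h <;> simp [h]
  by_cases hh : t.headD 0 < 0
  · -- `π` may have either parity; the sign of the inserted entry is the one that makes the result
    -- even-signed, and the two cases give the same count.
    obtain ⟨b, t, rfl⟩ : ∃ b t', t = b :: t' := by
      cases t with
      | nil => simp at hh
      | cons b t => exact ⟨b, t, rfl⟩
    have hb : b < 0 := by simpa using hh
    have hgoal : ∀ S : ℤ, S = (d : ℤ) * f d + ((m : ℤ) + 1 - 2 * d) * f (d + 1) →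
        S = k * f d + ((m : ℤ) + 1 - 2 * k + 2) * f (d + 1) := by
      intro S h
      linear_combination h - hk0 + 2 * hk1
    by_cases hE : IsEvenSigned π
    · simp only [hE, hh, hpos, true_iff, not_true_eq_false, false_and, and_false, if_false,
        true_and, Bool.true_eq_false, sum_const_zero, zero_add, add_zero, hfd, hfd1]
      apply hgoal
      rw [hsum (fun p => if noDD (0 :: (b :: t).insertIdx p ((m : ℤ) + 1)) = true ∧
        ((b :: t).insertIdx p ((m : ℤ) + 1)).headD 0 < 0 ∧
        (des (0 :: (b :: t).insertIdx p ((m : ℤ) + 1)) : ℤ) = k then 1 else 0)]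
      have h := sum_insert_pos_succ ((m : ℤ) + 1) b t f hb (by omega)
        (fun y hy => hltP y (List.mem_cons_of_mem _ hy)) hD
      rw [List.length_cons, sum_range_succ']
      have h0 : ¬ ((m : ℤ) + 1 < 0) := by omega
      simp only [List.insertIdx_zero, List.insertIdx_succ_cons, List.headD_cons, h0, hb, true_and,
        false_and, and_false, if_false, add_zero, ite_and]
      rw [h, hm, List.length_cons]
      push_cast
      ring
    · simp only [hE, hh, hneg, false_iff, not_true_eq_false, not_false_eq_true, false_and, and_false,
        if_false, true_and, Bool.true_eq_false, sum_const_zero, add_zero, hfd, hfd1]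
      apply hgoal
      rw [hsum (fun p => if noDD (0 :: (b :: t).insertIdx p (-((m : ℤ) + 1))) = true ∧
        ((b :: t).insertIdx p (-((m : ℤ) + 1))).headD 0 < 0 ∧
        (des (0 :: (b :: t).insertIdx p (-((m : ℤ) + 1))) : ℤ) = k then 1 else 0)]
      have h := sum_insert_neg (-((m : ℤ) + 1)) (b :: t) 0 f hltN hD
      have h0 : ∀ p, ((b :: t).insertIdx p (-((m : ℤ) + 1))).headD 0 < 0 := by
        intro p
        cases p with
        | zero => simp; omega
        | succ p => simpa using hb
      simp only [h0, true_and, ite_and]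
      rw [h, hm]
  · have hlast : ∀ p x, (t.insertIdx (p + 1) x).headD 0 = t.headD 0 := by
      intro p x; cases t <;> simp
    simp only [hh, false_and, if_false, mul_zero, zero_add, not_false_eq_true, true_and]
    by_cases hE : IsEvenSigned π
    · -- Only `m + 1` may be inserted, which never makes the first entry negative.
      have h0 : ¬ ((m : ℤ) + 1 < 0) := by omega
      have : ∀ p : ℕ, ¬ (t.insertIdx p ((m : ℤ) + 1)).headD 0 < 0 := by
        intro p
        cases p with
        | zero => simpa using h0
        | succ p => rwa [hlast]
      simp only [hE, hpos, this, true_iff, Bool.true_eq_false, not_true_eq_false, false_and,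
        and_false, if_false, sum_const_zero, add_zero]
    · simp only [hE, hneg, false_iff, not_true_eq_false, not_false_eq_true, false_and, and_false,
        if_false, true_and, Bool.true_eq_false, sum_const_zero, add_zero, hfd1]
      rw [hsum (fun p => if noDD (0 :: t.insertIdx p (-((m : ℤ) + 1))) = true ∧
        (t.insertIdx p (-((m : ℤ) + 1))).headD 0 < 0 ∧
        (des (0 :: t.insertIdx p (-((m : ℤ) + 1))) : ℤ) = k then 1 else 0)]
      -- Only the insertion of `-(m+1)` in front produces a negative first entry.
      rw [sum_range_succ']
      have hx : -((m : ℤ) + 1) < 0 := by omega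
      have hN : noDD (0 :: -((m : ℤ) + 1) :: t) = true ∧
          des (0 :: -((m : ℤ) + 1) :: t) = d + 1 := by
        cases t with
        | nil => simp [noDD_cons_cons, des_cons_cons, FD, hd]; omega
        | cons c t =>
          have hc : ¬ c < 0 := by simpa using hh
          have hc' : ¬ c < -((m : ℤ) + 1) := by omega
          have hFD : ¬ FD (-((m : ℤ) + 1)) (c :: t) := by
            simpa only [FD, List.head?_cons, Option.mem_def, Option.some.injEq,
              exists_eq_left'] using hc'
          rw [noDD_cons_cons] at hD
          rw [noDD_cons_cons, noDD_cons_cons, hd, des_cons_cons, des_cons_cons, des_cons_cons,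
            if_pos hx, if_neg hc, if_neg hc']
          exact ⟨⟨fun _ => hFD, fun h => absurd h hc', hD.2⟩, by omega⟩
      simp only [hlast, hh, false_and, and_false, if_false, sum_const_zero, zero_add,
        List.insertIdx_zero, List.headD_cons, hx, hN, true_and, hf]

lemma card_filter_cast {α : Type*} [Fintype α] (P : α → Prop) [DecidablePred P] :
    ((univ.filter P).card : ℤ) = ∑ x, if P x then 1 else 0 := by
  simp

/-- For all integers `n ≥ 1`, `k ≥ 0`:
`D⁻(n,k) = k·R⁻(n−1,k) + (n−2k+2)·R⁻(n−1,k−1) + T⁺(n−1,k−1)`. -/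
theorem stmt9 (n : ℕ) (hn : 1 ≤ n) (k : ℤ) (hk : 0 ≤ k) :
    Dmcnt n k =
      k * Rmcnt (n - 1) k + ((n : ℤ) - 2 * k + 2) * Rmcnt (n - 1) (k - 1) +
        Tpcnt (n - 1) (k - 1) := by
  classical
  obtain ⟨m, rfl⟩ : ∃ m, n = m + 1 := ⟨n - 1, by omega⟩
  simp only [Nat.add_sub_cancel, Dmcnt, Rmcnt, Tpcnt, RDm, RBm, RTp, RD, RT, RB, filter_filter,
    and_assoc, card_filter_cast]
  rw [← (ins_bijective m).sum_comp, Fintype.sum_prod_type, mul_sum, mul_sum,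
    ← sum_add_distrib, ← sum_add_distrib]
  refine sum_congr rfl fun π _ => ?_
  rw [Fintype.sum_prod_type]
  push_cast
  convert sum_ins π k
  exact pos_or_rank_zero_iff π
end
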